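/- Let Z be a δ-hyperbolic geodesic metric space and let P = α₀β₁α₁⋯β_kα_k be a concatenated path in Z such that each β_i is a (λ₁,λ₂)-quasigeodesic and each α_i is a (μ₁,μ₂)-quasigeodesic. Suppose that for each R ≥ 0 there exists B_R ≥ 0 such that for all i, each of the three sets N_{3δ+R}(β_i) ∩ β_{i+1}, N_{3δ+R}(β_i) ∩ α_i, and N_{3δ+R}(β_i) ∩ α_{i−1} has diameter at most B_R. Then there exists a constant L₀, depending only on δ, λ₁, λ₂, μ₁, μ₂ and the function R ↦ B_R, such that whenever the length |β_i| ≥ L₀ for every i, the distance in Z between the two endpoints of P is at least (1/(4λ₁μ₁))·|P| − μ₂/2, where |P| = Σ_{i=0}^{k}|α_i| + Σ_{i=1}^{k}|β_i|. -/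

import Mathlib

/-!
The path is compared with the broken geodesic through the endpoints of its pieces. Write `p` for
the initial point of the path, `sᵢ`, `eᵢ` for the endpoints of `βᵢ`, and `(x|y)_w` for the Gromov
product. It suffices to find a constant `C` with
`d(p, end) ≥ Σ d(eᵢ, sᵢ₊₁) + Σ d(sᵢ, eᵢ) - C k` (the first sum includes the first piece `α₀`),
because every `βᵢ` is long enough to absorb `C` together with the additive constants of
`βᵢ` and of the next `α`-piece, while the loss `μ₂` of `α₀` is halved using `d ≥ 0`.

* `exists_morse_const`: a geodesic lies in a uniform neighbourhood of any quasigeodesic with the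
  same endpoints. Only this half of the Morse lemma is needed. It follows from the logarithmic
  estimate `near_chain`: a geodesic spanned by a chain of `2 ^ N` short steps is `N d + M`-close
  to the chain.
* `gp_le_of_small_overlap`: by the Morse lemma, if two consecutive pieces had a large Gromov
  product at their (almost) common endpoint, they would fellow-travel, contradicting the bound on
  the overlaps. So the Gromov products at all corners are bounded by some `K₀`, and whenever
  `d(eᵢ, sᵢ₊₁)` is bounded, so is `(sᵢ|eᵢ₊₁)_{eᵢ}`.
* `broken_geodesic`: a local-to-global induction shows that `(p|eᵢ)_{sᵢ}` stays bounded. Across a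
  long `α`-piece two applications of the four-point inequality suffice. Across a short one, the
  overlap condition between `βᵢ` and `βᵢ₊₁` replaces the second one.
-/

open Metric

/-- `f : ℝ → Z` restricted to `[0, ℓ]` is a geodesic segment. -/
def IsGeodesicSeg {Z : Type*} [MetricSpace Z] (f : ℝ → Z) (ℓ : ℝ) : Prop :=
  0 ≤ ℓ ∧ ∀ s ∈ Set.Icc (0 : ℝ) ℓ, ∀ t ∈ Set.Icc (0 : ℝ) ℓ, dist (f s) (f t) = |s - t|

/-- A geodesic metric space: any two points are joined by a geodesic segment. -/
def GeodesicSpace (Z : Type*) [MetricSpace Z] : Prop :=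
  ∀ x y : Z, ∃ (f : ℝ → Z) (ℓ : ℝ), IsGeodesicSeg f ℓ ∧ f 0 = x ∧ f ℓ = y

/-- Every geodesic triangle is `δ`-thin. -/
def DeltaThinTriangles (Z : Type*) [MetricSpace Z] (δ : ℝ) : Prop :=
  ∀ (f₁ f₂ f₃ : ℝ → Z) (ℓ₁ ℓ₂ ℓ₃ : ℝ),
    IsGeodesicSeg f₁ ℓ₁ → IsGeodesicSeg f₂ ℓ₂ → IsGeodesicSeg f₃ ℓ₃ →
    f₁ ℓ₁ = f₂ 0 → f₂ ℓ₂ = f₃ 0 → f₃ ℓ₃ = f₁ 0 →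
    f₁ '' Set.Icc 0 ℓ₁ ⊆
      cthickening δ (f₂ '' Set.Icc 0 ℓ₂ ∪ f₃ '' Set.Icc 0 ℓ₃)

/-- `f : ℝ → Z` restricted to `[0, ℓ]` is a `(lam, c)`-quasigeodesic:
`(1/lam)|s - t| - c ≤ d(f s, f t) ≤ lam |s - t| + c`. -/
def IsQuasiGeodesic {Z : Type*} [MetricSpace Z] (lam c : ℝ) (f : ℝ → Z) (ℓ : ℝ) : Prop :=
  0 ≤ ℓ ∧ ∀ s ∈ Set.Icc (0 : ℝ) ℓ, ∀ t ∈ Set.Icc (0 : ℝ) ℓ,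
    (1 / lam) * |s - t| - c ≤ dist (f s) (f t) ∧ dist (f s) (f t) ≤ lam * |s - t| + c

/-! ### Geodesic segments as sets, thin triangles -/

/-- `S` is the image of a geodesic segment from `x` to `y`. -/
def IsGeo {Z : Type*} [MetricSpace Z] (x y : Z) (S : Set Z) : Prop :=
  ∃ (f : ℝ → Z) (ℓ : ℝ), IsGeodesicSeg f ℓ ∧ f 0 = x ∧ f ℓ = y ∧ S = f '' Set.Icc 0 ℓ

/-- Geodesic triangles are `d`-thin, each point of a side being at distance `< d` from an actual
point of one of the other sides. -/
def Thin (Z : Type*) [MetricSpace Z] (d : ℝ) : Prop :=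
  ∀ (x y z : Z) (S₁ S₂ S₃ : Set Z), IsGeo x y S₁ → IsGeo y z S₂ → IsGeo x z S₃ →
    ∀ w ∈ S₁, (∃ v ∈ S₂, dist w v < d) ∨ (∃ v ∈ S₃, dist w v < d)

section Geo

variable {Z : Type*} [MetricSpace Z]

lemma IsGeo.sub {f : ℝ → Z} {ℓ a b : ℝ} (hf : IsGeodesicSeg f ℓ) (ha : 0 ≤ a) (hab : a ≤ b)
    (hb : b ≤ ℓ) : IsGeo (f a) (f b) (f '' Set.Icc a b) := by
  refine ⟨fun t => f (a + t), b - a, ⟨by linarith, ?_⟩, by simp, by simp, ?_⟩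
  · rintro s ⟨hs0, hs1⟩ t ⟨ht0, ht1⟩
    rw [hf.2 (a + s) ⟨by linarith, by linarith⟩ (a + t) ⟨by linarith, by linarith⟩]
    congr 1; ring
  · ext w
    constructor
    · rintro ⟨t, ⟨ht0, ht1⟩, rfl⟩
      exact ⟨t - a, ⟨by linarith, by linarith⟩, by simp⟩
    · rintro ⟨t, ⟨ht0, ht1⟩, rfl⟩
      exact ⟨a + t, ⟨by linarith, by linarith⟩, rfl⟩

lemma IsGeo.symm {x y : Z} {S : Set Z} (h : IsGeo x y S) : IsGeo y x S := by
  obtain ⟨f, ℓ, hf, rfl, rfl, rfl⟩ := h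
  refine ⟨fun t => f (ℓ - t), ℓ, ⟨hf.1, ?_⟩, by simp, by simp, ?_⟩
  · rintro s ⟨hs0, hs1⟩ t ⟨ht0, ht1⟩
    rw [hf.2 (ℓ - s) ⟨by linarith, by linarith⟩ (ℓ - t) ⟨by linarith, by linarith⟩, abs_sub_comm]
    congr 1; ring
  · ext w
    constructor <;>
    · rintro ⟨t, ⟨ht0, ht1⟩, rfl⟩
      exact ⟨ℓ - t, ⟨by linarith, by linarith⟩, by simp⟩

lemma IsGeo.dist_add {x y : Z} {S : Set Z} (h : IsGeo x y S) {w : Z} (hw : w ∈ S) :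
    dist x w + dist w y = dist x y := by
  obtain ⟨f, ℓ, hf, rfl, rfl, rfl⟩ := h
  obtain ⟨t, ⟨ht0, ht1⟩, rfl⟩ := hw
  have h0 : (0 : ℝ) ∈ Set.Icc 0 ℓ := ⟨le_rfl, hf.1⟩
  have h1 : ℓ ∈ Set.Icc 0 ℓ := ⟨hf.1, le_rfl⟩
  rw [hf.2 0 h0 t ⟨ht0, ht1⟩, hf.2 t ⟨ht0, ht1⟩ ℓ h1, hf.2 0 h0 ℓ h1, abs_sub_comm 0 t,
    abs_sub_comm t ℓ, abs_sub_comm 0 ℓ, abs_of_nonneg (by linarith), abs_of_nonneg (by linarith),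
    abs_of_nonneg (by linarith)]
  ring

lemma IsGeo.exists_at {x y : Z} {S : Set Z} (h : IsGeo x y S) {t : ℝ} (ht0 : 0 ≤ t)
    (ht1 : t ≤ dist x y) : ∃ w ∈ S, dist x w = t := by
  obtain ⟨f, ℓ, hf, rfl, rfl, rfl⟩ := h
  have h0 : (0 : ℝ) ∈ Set.Icc 0 ℓ := ⟨le_rfl, hf.1⟩
  have h1 : ℓ ∈ Set.Icc 0 ℓ := ⟨hf.1, le_rfl⟩
  rw [hf.2 0 h0 ℓ h1, abs_sub_comm, abs_of_nonneg (by linarith [hf.1])] at ht1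
  refine ⟨f t, ⟨t, ⟨ht0, by linarith⟩, rfl⟩, ?_⟩
  rw [hf.2 0 h0 t ⟨ht0, by linarith⟩, abs_sub_comm, abs_of_nonneg (by linarith)]
  ring

lemma exists_isGeo (hG : GeodesicSpace Z) (x y : Z) : ∃ S, IsGeo x y S := by
  obtain ⟨f, ℓ, hf, hx, hy⟩ := hG x y
  exact ⟨_, f, ℓ, hf, hx, hy, rfl⟩

lemma thin_of_deltaThin {δ : ℝ} (hδ : 0 ≤ δ) (h : DeltaThinTriangles Z δ) : Thin Z (δ + 1) := by
  intro x y z S₁ S₂ S₃ h₁ h₂ h₃ w hw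
  obtain ⟨f₁, ℓ₁, g₁, rfl, rfl, rfl⟩ := h₁
  obtain ⟨f₂, ℓ₂, g₂, e₂, rfl, rfl⟩ := h₂
  obtain ⟨f₃, ℓ₃, g₃, e₃, e₃', rfl⟩ := h₃.symm
  have hw' := h f₁ f₂ f₃ ℓ₁ ℓ₂ ℓ₃ g₁ g₂ g₃ e₂.symm e₃.symm e₃' hw
  have hw'' := cthickening_subset_thickening' (by linarith : 0 < δ + 1) (by linarith) _ hw'
  rw [mem_thickening_iff] at hw''
  obtain ⟨v, hv, hd⟩ := hw''
  rcases hv with hv | hv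
  · exact Or.inl ⟨v, hv, hd⟩
  · exact Or.inr ⟨v, hv, hd⟩

/-! ### Gromov products -/

/-- The Gromov product `(x|y)_w`. -/
noncomputable def gp (x y w : Z) : ℝ := (dist x w + dist y w - dist x y) / 2

lemma gp_comm (x y w : Z) : gp x y w = gp y x w := by
  simp only [gp, dist_comm x y]; ring

lemma gp_le_left (x y w : Z) : gp x y w ≤ dist x w := by
  have := dist_triangle_left y w x
  simp only [gp]; linarith

/-- Two sides of a triangle issuing from `w` fellow-travel up to time `(x|y)_w - d`: the third
side is at distance at least `(x|y)_w` from `w`. -/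
lemma fellow {d : ℝ} (hT : Thin Z d) (hG : GeodesicSpace Z) {x y w u : Z} {S S' : Set Z}
    (hS : IsGeo w y S) (hS' : IsGeo w x S') (hu : u ∈ S) (ht : dist w u ≤ gp x y w - d) :
    ∃ v ∈ S', dist u v < d := by
  obtain ⟨S₃, h₃⟩ := exists_isGeo hG y x
  rcases hT w y x S S₃ S' hS h₃ hS' u hu with ⟨v, hv, hd⟩ | h
  · exfalso
    have h1 := h₃.dist_add hv
    have h2 := dist_triangle x v w
    have h3 := dist_triangle y v w
    have h4 := dist_triangle w u v
    simp only [gp, dist_comm] at *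
    linarith
  · exact h

/-- The four-point inequality for Gromov products. -/
lemma four_point {d : ℝ} (hd : 0 ≤ d) (hT : Thin Z d) (hG : GeodesicSpace Z) (x y z w : Z) :
    min (gp x y w) (gp y z w) - 3 * d ≤ gp x z w := by
  have hnn : 0 ≤ gp x z w := by
    have := dist_triangle_right x z w
    simp only [gp]; linarith
  rcases lt_or_ge (min (gp x y w) (gp y z w) - d) 0 with h | h
  · linarith
  set t := min (gp x y w) (gp y z w) - d with ht
  have h1 : t ≤ gp x y w - d := by linarith [min_le_left (gp x y w) (gp y z w)]
  have h2 : t ≤ gp y z w - d := by linarith [min_le_right (gp x y w) (gp y z w)]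
  obtain ⟨Sx, hx⟩ := exists_isGeo hG w x
  obtain ⟨Sy, hy⟩ := exists_isGeo hG w y
  obtain ⟨Sz, hz⟩ := exists_isGeo hG w z
  obtain ⟨u, hu, hut⟩ := hy.exists_at h (by
    have := gp_le_left y z w
    rw [dist_comm w y]; linarith)
  obtain ⟨v, hv, hvd⟩ := fellow hT hG hy hx hu (by linarith)
  obtain ⟨v', hv', hvd'⟩ := fellow hT hG hy hz hu (by rw [gp_comm z y]; linarith)
  have e1 := hx.dist_add hv
  have e2 := hz.dist_add hv'
  have e3 := dist_triangle w v u
  have e4 := dist_triangle w v' u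
  have e5 := dist_triangle x v z
  have e6 := dist_triangle v u z
  have e7 := dist_triangle u v' z
  simp only [gp, dist_comm] at *
  linarith

/-- The form in which the four-point inequality propagates smallness: if `(x|z)_w ≤ K` and
`(x|y)_w` is large, then `(y|z)_w` is small. -/
lemma gp_propagate {d K : ℝ} (hd : 0 ≤ d) (hT : Thin Z d) (hG : GeodesicSpace Z) {x y z w : Z}
    (h : gp x z w ≤ K) (hxy : K + 3 * d < gp x y w) : gp y z w ≤ K + 3 * d := by
  have h4 := four_point hd hT hG x y z w
  by_contra! hc
  have := lt_min hxy hc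
  linarith

/-! ### Geodesics are close to quasigeodesics -/

/-- The logarithmic estimate: bisecting a chain with at most `2 ^ N` steps of size at most `M`
costs one thin triangle for each halving. -/
lemma near_chain {d M : ℝ} (hT : Thin Z d) (hG : GeodesicSpace Z) (p : ℕ → Z) (n : ℕ)
    (hM : ∀ i < n, dist (p i) (p (i + 1)) ≤ M) (hM0 : 0 ≤ M) (N : ℕ) :
    ∀ i j : ℕ, i ≤ j → j ≤ n → j ≤ i + 2 ^ N → ∀ S, IsGeo (p i) (p j) S → ∀ w ∈ S,
      ∃ m ≤ n, dist w (p m) ≤ N * d + M := by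
  induction N with
  | zero =>
    intro i j hij hjn hj S hS w hw
    refine ⟨i, by omega, ?_⟩
    have h1 := hS.dist_add hw
    have h2 : dist (p i) (p j) ≤ M := by
      rcases hij.eq_or_lt with rfl | hlt
      · simpa using hM0
      · have : j = i + 1 := by simp at hj; omega
        subst this
        exact hM i (by omega)
    have h3 := dist_nonneg (x := w) (y := p j)
    rw [dist_comm]
    push_cast; linarith
  | succ N ih =>
    intro i j hij hjn hj S hS w hw
    rw [pow_succ] at hj
    by_cases hc : j ≤ i + 2 ^ N
    · obtain ⟨m, hm, hd⟩ := ih i j hij hjn hc S hS w hw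
      obtain ⟨T, hTT⟩ := exists_isGeo hG (p i) (p i)
      have hd0 : 0 < d := by
        rcases hT _ _ _ _ _ _ hS hS.symm hTT w hw with ⟨v, -, hv⟩ | ⟨v, -, hv⟩ <;>
        exact lt_of_le_of_lt dist_nonneg hv
      exact ⟨m, hm, by push_cast; linarith⟩
    · push Not at hc
      obtain ⟨S₁, h₁⟩ := exists_isGeo hG (p i) (p (i + 2 ^ N))
      obtain ⟨S₂, h₂⟩ := exists_isGeo hG (p (i + 2 ^ N)) (p j)
      rcases hT _ _ _ _ _ _ hS h₂.symm h₁ w hw with ⟨v, hv, hvd⟩ | ⟨v, hv, hvd⟩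
      · obtain ⟨m, hm, hd⟩ := ih _ _ hc.le hjn (by omega) _ h₂ v hv
        have := dist_triangle w v (p m)
        exact ⟨m, hm, by push_cast; linarith⟩
      · obtain ⟨m, hm, hd⟩ := ih _ _ (by omega) (by omega) le_rfl _ h₁ v hv
        have := dist_triangle w v (p m)
        exact ⟨m, hm, by push_cast; linarith⟩

lemma near_quasi {d lam c L : ℝ} (hT : Thin Z d) (hG : GeodesicSpace Z) (hlam : 1 ≤ lam)
    (hc : 0 ≤ c) {γ : ℝ → Z} (hγ : IsQuasiGeodesic lam c γ L) {s s' : ℝ}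
    (hs : s ∈ Set.Icc 0 L) (hs' : s' ∈ Set.Icc 0 L) (N : ℕ) (hN : |s' - s| + 2 ≤ 2 ^ N)
    {S : Set Z} (hS : IsGeo (γ s) (γ s') S) {w : Z} (hw : w ∈ S) :
    ∃ r ∈ Set.Icc 0 L, dist w (γ r) ≤ N * d + (lam + c) := by
  -- one extra step keeps `n` positive when `s = s'`
  set n : ℕ := ⌈|s' - s|⌉₊ + 1 with hn
  have hn0 : (0 : ℝ) < n := by rw [hn]; positivity
  have hnle : |s' - s| ≤ n := by
    have := Nat.le_ceil |s' - s|
    rw [hn]; push_cast; linarith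
  have hmem : ∀ i ≤ n, s + (s' - s) * (i / n) ∈ Set.Icc 0 L := by
    intro i hi
    have h0 : (0 : ℝ) ≤ i / n := by positivity
    have h1 : (i / n : ℝ) ≤ 1 := by
      rw [div_le_one hn0]; exact_mod_cast hi
    obtain ⟨a, b⟩ := hs
    obtain ⟨a', b'⟩ := hs'
    constructor <;> nlinarith
  have hnN : n ≤ 0 + 2 ^ N := by
    have h1 := Nat.ceil_lt_add_one (abs_nonneg (s' - s))
    have : (n : ℝ) ≤ 2 ^ N := by rw [hn]; push_cast; linarith
    rw [zero_add]; exact_mod_cast this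
  have := near_chain (M := lam + c) hT hG (fun i : ℕ => γ (s + (s' - s) * (i / n))) n ?_
    (by linarith) N 0 n (Nat.zero_le _) le_rfl hnN S ?_ w hw
  · obtain ⟨m, hm, hd⟩ := this
    exact ⟨_, hmem m hm, hd⟩
  · intro i hi
    have h1 := (hγ.2 _ (hmem i hi.le) _ (hmem (i + 1) hi)).2
    have h2 : |s + (s' - s) * ((i : ℝ) / n) - (s + (s' - s) * (((i + 1 : ℕ) : ℝ) / n))| ≤ 1 := by
      have : s + (s' - s) * ((i : ℝ) / n) - (s + (s' - s) * (((i + 1 : ℕ) : ℝ) / n))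
          = -((s' - s) / n) := by
        push_cast; field_simp; ring
      rw [this, abs_neg, abs_div, abs_of_pos hn0, div_le_one hn0]
      exact hnle
    have h3 : lam * |s + (s' - s) * ((i : ℝ) / n) - (s + (s' - s) * (((i + 1 : ℕ) : ℝ) / n))|
        ≤ lam * 1 := mul_le_mul_of_nonneg_left h2 (by linarith)
    linarith
  · have : (n : ℝ) / n = 1 := div_self hn0.ne'
    simpa [this] using hS

end Geo

/-- Exponential growth beats linear growth: the distances `D` at which the logarithmic estimate
improves on `D` include all large ones. -/
lemma exists_growth_const {d lam c M : ℝ} (hd : 0 ≤ d) (hlam : 1 ≤ lam) (hc : 0 ≤ c)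
    (hM : 0 ≤ M) :
    ∃ D₀ : ℝ, 0 ≤ D₀ ∧ ∀ D, D₀ ≤ D →
      ∃ N : ℕ, lam * (6 * D + c) + 2 ≤ 2 ^ N ∧ N * d + 2 * d + M ≤ D - 1 := by
  have hlim : Filter.Tendsto (fun n : ℕ => (6 * lam * d) * ((n : ℝ) ^ 1 / (2 : ℝ) ^ n)
      + (lam * (6 * (3 * d + M + 1) + c) + 2) * ((n : ℝ) ^ 0 / (2 : ℝ) ^ n))
      Filter.atTop (nhds ((6 * lam * d) * 0 + (lam * (6 * (3 * d + M + 1) + c) + 2) * 0)) :=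
    ((tendsto_pow_const_div_const_pow_of_one_lt 1 one_lt_two).const_mul _).add
      ((tendsto_pow_const_div_const_pow_of_one_lt 0 one_lt_two).const_mul _)
  simp only [mul_zero, add_zero] at hlim
  obtain ⟨n₀, hn₀⟩ := Filter.eventually_atTop.1 (hlim.eventually (gt_mem_nhds one_pos))
  refine ⟨(n₀ + 3) * d + M + 1, by positivity, fun D hD => ?_⟩
  have hD0 : 0 ≤ D := le_trans (by positivity) hD
  have h1 : (1 : ℝ) ≤ lam * (6 * D + c) + 2 := by
    have : 0 ≤ lam * (6 * D + c) := by positivity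
    linarith
  obtain ⟨n, hn, hn'⟩ := exists_nat_pow_near h1 one_lt_two
  refine ⟨n + 1, hn'.le, ?_⟩
  push_cast
  rcases lt_or_ge n n₀ with h | h
  · have : (n : ℝ) ≤ n₀ := by exact_mod_cast h.le
    nlinarith
  · have h2 := hn₀ n h
    have hp : (0 : ℝ) < 2 ^ n := by positivity
    have h3 : 6 * lam * d * n + (lam * (6 * (3 * d + M + 1) + c) + 2) < 2 ^ n := by
      have := mul_lt_mul_of_pos_right h2 hp
      field_simp at this
      linarith
    have h4 : 6 * lam * ((n + 3) * d + M + 1) < 6 * lam * D := by nlinarith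
    have h5 := lt_of_mul_lt_mul_left h4 (by positivity)
    linarith

section Morse

variable {Z : Type*} [MetricSpace Z]

/-- If a geodesic is `D`-close to a quasigeodesic with the same endpoints and `D` is large, then
it is even `D - 1`-close: between the points at distance `2 D` on both sides of `w`, the
quasigeodesic has length linear in `D`, so the logarithmic estimate applies. -/
lemma morse_improve {d lam c L D : ℝ} (hT : Thin Z d) (hG : GeodesicSpace Z) (hd : 0 ≤ d)
    (hlam : 1 ≤ lam) (hc : 0 ≤ c) {γ : ℝ → Z} (hγ : IsQuasiGeodesic lam c γ L)
    {N : ℕ} (hN : lam * (6 * D + c) + 2 ≤ 2 ^ N) (hND : N * d + 2 * d + (lam + c) ≤ D - 1)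
    {S : Set Z} (hS : IsGeo (γ 0) (γ L) S)
    (hD : ∀ w ∈ S, ∃ s ∈ Set.Icc 0 L, dist w (γ s) ≤ D) :
    ∀ w ∈ S, ∃ s ∈ Set.Icc 0 L, dist w (γ s) ≤ D - 1 := by
  have hNd : 0 ≤ N * d := by positivity
  obtain ⟨f, ℓ, hf, hf0, hf1, rfl⟩ := hS
  rintro _ ⟨t, ⟨ht0, ht1⟩, rfl⟩
  have hD0 : 0 ≤ D := by linarith
  -- a point of the geodesic on each side of `f t`, cut off at the endpoints
  have left : ∃ a, 0 ≤ a ∧ a ≤ t ∧ t - a ≤ 2 * D ∧ ∃ s ∈ Set.Icc 0 L, dist (f a) (γ s) ≤ D ∧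
      (t - a = 2 * D ∨ f a = γ s) := by
    rcases le_or_gt 0 (t - 2 * D) with h | h
    · obtain ⟨s, hs, hsd⟩ := hD (f (t - 2 * D)) ⟨_, ⟨h, by linarith⟩, rfl⟩
      exact ⟨_, h, by linarith, by linarith, s, hs, hsd, Or.inl (by ring)⟩
    · exact ⟨0, le_rfl, ht0, by linarith, 0, ⟨le_rfl, hγ.1⟩, by simpa [hf0] using hD0,
        Or.inr hf0⟩
  have right : ∃ b, t ≤ b ∧ b ≤ ℓ ∧ b - t ≤ 2 * D ∧ ∃ s ∈ Set.Icc 0 L, dist (f b) (γ s) ≤ D ∧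
      (b - t = 2 * D ∨ f b = γ s) := by
    rcases le_or_gt (t + 2 * D) ℓ with h | h
    · obtain ⟨s, hs, hsd⟩ := hD (f (t + 2 * D)) ⟨_, ⟨by linarith, h⟩, rfl⟩
      exact ⟨_, by linarith, h, by linarith, s, hs, hsd, Or.inl (by ring)⟩
    · exact ⟨ℓ, ht1, le_rfl, by linarith, L, ⟨hγ.1, le_rfl⟩, by simpa [hf1] using hD0,
        Or.inr hf1⟩
  obtain ⟨a, ha0, hat, hta, s, hs, hsd, hsa⟩ := left
  obtain ⟨b, htb, hbl, hbt, s', hs', hsd', hsb⟩ := right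
  have hda : dist (f t) (f a) = t - a := by
    rw [hf.2 t ⟨ht0, ht1⟩ a ⟨ha0, by linarith⟩, abs_of_nonneg (by linarith)]
  have hdb : dist (f t) (f b) = b - t := by
    rw [hf.2 t ⟨ht0, ht1⟩ b ⟨by linarith, hbl⟩, abs_sub_comm, abs_of_nonneg (by linarith)]
  have hab := IsGeo.sub hf ha0 (hat.trans htb) hbl
  obtain ⟨Sb, gb⟩ := exists_isGeo hG (f b) (γ s')
  obtain ⟨Sa, ga⟩ := exists_isGeo hG (f a) (γ s)
  -- the lateral sides of the quadrilateral are far from `f t` unless they are degenerate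
  have lateral : ∀ (y : Z) (r e : ℝ) (S : Set Z), IsGeo y (γ r) S → r ∈ Set.Icc 0 L →
      dist y (γ r) ≤ D → dist (f t) y = e → (e = 2 * D ∨ y = γ r) →
      (∃ v ∈ S, dist (f t) v < 2 * d) → ∃ s ∈ Set.Icc 0 L, dist (f t) (γ s) ≤ D - 1 := by
    rintro y r e S gS hr hyr hye hor ⟨v, hv, hvd⟩
    have h1 := gS.dist_add hv
    have h2 := dist_triangle (f t) v y
    have h3 := dist_nonneg (x := v) (y := γ r)
    rw [dist_comm v y] at h2
    rcases hor with h | h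
    · linarith
    · subst h
      rw [dist_self] at h1
      exact ⟨r, hr, by linarith⟩
  obtain ⟨Sm, gm⟩ := exists_isGeo hG (γ s) (γ s')
  obtain ⟨Sd, gd⟩ := exists_isGeo hG (f a) (γ s')
  rcases hT _ _ _ _ _ _ hab gb gd (f t) ⟨t, ⟨hat, htb⟩, rfl⟩ with ⟨v, hv, hvd⟩ | ⟨v, hv, hvd⟩
  · exact lateral _ _ _ _ gb hs' hsd' hdb hsb ⟨v, hv, by linarith⟩
  rcases hT _ _ _ _ _ _ gd gm.symm ga v hv with ⟨u, hu, hud⟩ | ⟨u, hu, hud⟩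
  · have hqg := (hγ.2 s' hs' s hs).1
    have e1 := dist_triangle (γ s') (f b) (γ s)
    have e2 := dist_triangle (f b) (f t) (γ s)
    have e3 := dist_triangle (f t) (f a) (γ s)
    rw [dist_comm (γ s') (f b)] at e1
    rw [dist_comm (f b) (f t)] at e2
    have e4 : 1 / lam * |s' - s| ≤ 6 * D + c := by linarith
    have e5 : |s' - s| ≤ lam * (6 * D + c) := by
      rw [one_div, inv_mul_le_iff₀ (by linarith)] at e4
      exact e4
    obtain ⟨r, hr, hrd⟩ := near_quasi hT hG hlam hc hγ hs hs' N (by linarith) gm hu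
    refine ⟨r, hr, ?_⟩
    have e6 := dist_triangle (f t) v (γ r)
    have e7 := dist_triangle v u (γ r)
    linarith
  · refine lateral _ _ _ _ ga hs hsd hda hsa ⟨u, hu, ?_⟩
    have := dist_triangle (f t) v u
    linarith

end Morse

/-- One half of the Morse lemma, with a constant uniform over all spaces. -/
lemma exists_morse_const {d lam c : ℝ} (hd : 0 ≤ d) (hlam : 1 ≤ lam) (hc : 0 ≤ c) :
    ∃ D : ℝ, 0 ≤ D ∧ ∀ (Z : Type) [MetricSpace Z], Thin Z d → GeodesicSpace Z →
      ∀ (γ : ℝ → Z) (L : ℝ), IsQuasiGeodesic lam c γ L → ∀ S, IsGeo (γ 0) (γ L) S →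
        ∀ w ∈ S, ∃ z ∈ γ '' Set.Icc 0 L, dist w z ≤ D := by
  obtain ⟨D₀, hD₀, hgrow⟩ := exists_growth_const (M := lam + c) hd hlam hc (by linarith)
  refine ⟨D₀, hD₀, fun Z _ hT hG γ L hγ S hS => ?_⟩
  have key : ∀ n : ℕ, (∀ w ∈ S, ∃ s ∈ Set.Icc 0 L, dist w (γ s) ≤ D₀ + n) →
      ∀ w ∈ S, ∃ s ∈ Set.Icc 0 L, dist w (γ s) ≤ D₀ := by
    intro n
    induction n with
    | zero => intro h; simpa using h
    | succ n ih =>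
      intro h
      apply ih
      obtain ⟨N, hN, hND⟩ := hgrow (D₀ + (n + 1 : ℕ)) (by
        have : (0 : ℝ) ≤ (n + 1 : ℕ) := by positivity
        linarith)
      have := morse_improve hT hG hd hlam hc hγ hN hND hS h
      simpa [← add_assoc] using this
  obtain ⟨n, hn⟩ := exists_nat_ge (dist (γ 0) (γ L))
  intro w hw
  obtain ⟨s, hs, h⟩ := key n (fun w hw => ⟨0, ⟨le_rfl, hγ.1⟩, by
    have h1 := hS.dist_add hw
    have h2 := dist_nonneg (x := w) (y := γ L)
    rw [dist_comm]; linarith⟩) w hw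
  exact ⟨γ s, ⟨s, hs, rfl⟩, h⟩

/-! ### Small overlaps give small Gromov products -/

section Local

variable {Z : Type*} [MetricSpace Z]

/-- Here geodesics from `p` to `x` stay close to `G₁`, geodesics from `q` to `y` stay close to
`G₂`, and `p`, `q` are at distance at most `A`. If `(x|y)_p` is large, the geodesics from `p` to
`x` and from `q` to `y` fellow-travel, so that `G₂` meets the `r`-neighbourhood of `G₁` both at
`q` and far from `q`. -/
lemma gp_le_of_small_overlap {d D₁ D₂ A B r : ℝ} (hT : Thin Z d) (hG : GeodesicSpace Z)
    (hd : 0 ≤ d) (hD₁ : 0 ≤ D₁) (hD₂ : 0 ≤ D₂) (hA : 0 ≤ A) (hB : 0 ≤ B)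
    {x p q y : Z} {G₁ G₂ : Set Z} (hp : p ∈ G₁) (hq : q ∈ G₂)
    (h₁ : ∀ S, IsGeo p x S → ∀ w ∈ S, ∃ z ∈ G₁, dist w z ≤ D₁)
    (h₂ : ∀ S, IsGeo q y S → ∀ w ∈ S, ∃ z ∈ G₂, dist w z ≤ D₂)
    (hpq : dist p q ≤ A) (hr : D₁ + D₂ + 2 * d + A ≤ r)
    (hov : Bornology.IsBounded G₂) (hdiam : diam (cthickening r G₁ ∩ G₂) ≤ B) :
    gp x y p ≤ A + B + D₂ + 3 * d := by
  rcases lt_or_ge (gp x y p - d) 0 with h | h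
  · linarith
  obtain ⟨Sx, gx⟩ := exists_isGeo hG p x
  obtain ⟨Sy, gy⟩ := exists_isGeo hG p y
  obtain ⟨Spq, gpq⟩ := exists_isGeo hG p q
  obtain ⟨Sqy, gqy⟩ := exists_isGeo hG q y
  obtain ⟨u, hu, hut⟩ := gx.exists_at h (by
    have := gp_le_left x y p
    rw [dist_comm p x]; linarith)
  obtain ⟨v, hv, huv⟩ := fellow hT hG gx gy hu (by rw [gp_comm y x]; linarith)
  rcases hT _ _ _ _ _ _ gy gqy.symm gpq v hv with ⟨v', hv', hvd⟩ | ⟨v', hv', hvd⟩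
  · obtain ⟨g, hg, hgd⟩ := h₁ _ gx u hu
    obtain ⟨z, hz, hzd⟩ := h₂ _ gqy v' hv'
    have e1 := dist_triangle u v z
    have e2 := dist_triangle v v' z
    have e3 := dist_triangle z u g
    rw [dist_comm z u] at e3
    have mz : z ∈ cthickening r G₁ ∩ G₂ :=
      ⟨mem_cthickening_of_dist_le z g _ _ hg (by linarith), hz⟩
    have mq : q ∈ cthickening r G₁ ∩ G₂ :=
      ⟨mem_cthickening_of_dist_le q p _ _ hp (by rw [dist_comm]; linarith), hq⟩
    have e4 := (dist_le_diam_of_mem (hov.subset Set.inter_subset_right) mq mz).trans hdiam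
    have e5 := dist_triangle p q u
    have e6 := dist_triangle q z u
    rw [dist_comm z u] at e6
    linarith
  · have e1 := gpq.dist_add hv'
    have e2 := dist_triangle p v' u
    have e3 := dist_triangle v' v u
    have e4 := dist_nonneg (x := v') (y := q)
    rw [dist_comm v' v, dist_comm v u] at e3
    linarith

lemma IsQuasiGeodesic.isBounded {lam c L : ℝ} (hlam : 1 ≤ lam) {γ : ℝ → Z}
    (hγ : IsQuasiGeodesic lam c γ L) : Bornology.IsBounded (γ '' Set.Icc 0 L) := by
  rw [isBounded_iff]
  refine ⟨lam * L + c, ?_⟩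
  rintro _ ⟨s, hs, rfl⟩ _ ⟨t, ht, rfl⟩
  have h1 := (hγ.2 s hs t ht).2
  have h2 : |s - t| ≤ L := by
    rw [abs_le]; constructor <;> linarith [hs.1, hs.2, ht.1, ht.2]
  nlinarith

lemma IsQuasiGeodesic.le_dist {lam c L : ℝ} {γ : ℝ → Z}
    (hγ : IsQuasiGeodesic lam c γ L) : 1 / lam * L - c ≤ dist (γ 0) (γ L) := by
  have := (hγ.2 0 ⟨le_rfl, hγ.1⟩ L ⟨hγ.1, le_rfl⟩).1
  rwa [zero_sub, abs_neg, abs_of_nonneg hγ.1] at this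

/-! ### Local to global -/

/-- The broken geodesic `p, s₀, e₀, s₁, …, e_{k-1}, s_k` is as long as the distance between its
endpoints, up to a bounded error per corner. The segments `[eᵢ, sᵢ₊₁]` may be short; the bound
`hshort` controls the corner formed by `[sᵢ, eᵢ]` and `[sᵢ₊₁, eᵢ₊₁]` in that case. -/
lemma broken_geodesic {d K₀ K₁ A K : ℝ} (hT : Thin Z d) (hG : GeodesicSpace Z) (hd : 0 ≤ d)
    (hA : A = 2 * K₀ + 6 * d) (hK₀ : 0 ≤ K₀) (hK₁ : 0 ≤ K₁)
    (hK : K = K₀ + K₁ + A + 3 * d)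
    (p : Z) (s e : ℕ → Z) (k : ℕ)
    (h0 : 0 < k → gp p (e 0) (s 0) ≤ K₀)
    (hend : ∀ i < k, gp (s i) (s (i + 1)) (e i) ≤ K₀)
    (hstart : ∀ i, i + 1 < k → gp (e i) (e (i + 1)) (s (i + 1)) ≤ K₀)
    (hshort : ∀ i, i + 1 < k → dist (e i) (s (i + 1)) ≤ A → gp (s i) (e (i + 1)) (e i) ≤ K₁)
    (hlong : ∀ i < k, K + K₀ + K₁ + 3 * d < dist (s i) (e i)) :
    dist p (s 0) + ∑ i ∈ Finset.range k,
      (dist (s i) (e i) + dist (e i) (s (i + 1)) - (2 * K + 2 * K₀ + 6 * d)) ≤ dist p (s k) := by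
  have key : ∀ j ≤ k, dist p (s 0) + ∑ i ∈ Finset.range j,
      (dist (s i) (e i) + dist (e i) (s (i + 1)) - (2 * K + 2 * K₀ + 6 * d)) ≤ dist p (s j) ∧
      (j < k → gp p (e j) (s j) ≤ K) := by
    intro j
    induction j with
    | zero => exact fun _ => ⟨by simp, fun h => (h0 h).trans (by linarith)⟩
    | succ j ih =>
      intro hj
      obtain ⟨ih1, ih2⟩ := ih (by omega)
      have ih2 := ih2 (by omega)
      have hl := hlong j (by omega)
      -- at `e j` the points `s j` and `p` lie in nearly the same direction
      have hback : K₀ + K₁ + 3 * d < gp (s j) p (e j) := by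
        have : gp (s j) p (e j) = dist (s j) (e j) - gp p (e j) (s j) := by
          simp only [gp, dist_comm]; ring
        linarith
      have hnext : gp p (s (j + 1)) (e j) ≤ K₀ + 3 * d :=
        gp_propagate hd hT hG (hend j (by omega)) (by linarith)
      refine ⟨?_, fun hj' => ?_⟩
      · rw [Finset.sum_range_succ]
        simp only [gp, dist_comm] at ih1 ih2 hnext ⊢
        linarith
      · rcases le_or_gt (dist (e j) (s (j + 1))) A with hs | hs
        · have h1 : gp p (e (j + 1)) (e j) ≤ K₁ + 3 * d :=
            gp_propagate hd hT hG (hshort j hj' hs) (by linarith)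
          have t1 := dist_triangle p (e j) (s (j + 1))
          have t2 := dist_triangle (e (j + 1)) (e j) (s (j + 1))
          simp only [gp] at h1 ⊢
          linarith
        · have h1 : gp (e j) p (s (j + 1)) = dist (e j) (s (j + 1)) - gp p (s (j + 1)) (e j) := by
            simp only [gp, dist_comm]; ring
          have := gp_propagate hd hT hG (hstart j hj') (y := p) (by linarith)
          linarith
  exact (key k le_rfl).1

end Local

/-! ### The path of quasigeodesics -/

/-- Lemma 4.4 of the paper.  There is a constant `L₀`, depending only
on `δ, λ₁, λ₂, μ₁, μ₂` and the overlap function `R ↦ B R`, such that in any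
`δ`-hyperbolic geodesic space, any broken quasigeodesic path `P = α₀β₁α₁⋯β_kα_k`,
whose `β`-pieces are `(λ₁,λ₂)`-quasigeodesics of length at least `L₀` with
`(3δ+R)`-overlaps of diameter at most `B R` with neighboring pieces, and whose
`α`-pieces are `(μ₁,μ₂)`-quasigeodesics, satisfies
`‖P‖ ≥ (1/(4λ₁μ₁))|P| - μ₂/2`. -/
theorem broken_quasigeodesic_lower_bound
    (δ lam₁ lam₂ mu₁ mu₂ : ℝ) (Bfun : ℝ → ℝ)
    (hδ : 0 ≤ δ) (hlam₁ : 1 ≤ lam₁) (hlam₂ : 0 ≤ lam₂)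
    (hmu₁ : 1 ≤ mu₁) (hmu₂ : 0 ≤ mu₂) (hBfun : ∀ R, 0 ≤ R → 0 ≤ Bfun R) :
    ∃ L₀ : ℝ, ∀ (Z : Type) [MetricSpace Z],
      GeodesicSpace Z → DeltaThinTriangles Z δ →
      ∀ (k : ℕ)
        (αf : Fin (k + 1) → ℝ → Z) (αl : Fin (k + 1) → ℝ)
        (βf : Fin k → ℝ → Z) (βl : Fin k → ℝ),
        (∀ i, IsQuasiGeodesic mu₁ mu₂ (αf i) (αl i)) →
        (∀ i, IsQuasiGeodesic lam₁ lam₂ (βf i) (βl i)) →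
        (∀ i : Fin k, αf i.castSucc (αl i.castSucc) = βf i 0) →
        (∀ i : Fin k, βf i (βl i) = αf i.succ 0) →
        (∀ R : ℝ, 0 ≤ R →
          (∀ (i : Fin k) (h : (i : ℕ) + 1 < k),
            diam (cthickening (3 * δ + R) (βf i '' Set.Icc 0 (βl i)) ∩
              (βf ⟨(i : ℕ) + 1, h⟩ '' Set.Icc 0 (βl ⟨(i : ℕ) + 1, h⟩))) ≤ Bfun R) ∧
          (∀ i : Fin k,
            diam (cthickening (3 * δ + R) (βf i '' Set.Icc 0 (βl i)) ∩
              (αf i.succ '' Set.Icc 0 (αl i.succ))) ≤ Bfun R) ∧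
          (∀ i : Fin k,
            diam (cthickening (3 * δ + R) (βf i '' Set.Icc 0 (βl i)) ∩
              (αf i.castSucc '' Set.Icc 0 (αl i.castSucc))) ≤ Bfun R)) →
        (∀ i : Fin k, L₀ ≤ βl i) →
        (1 / (4 * lam₁ * mu₁)) * ((∑ i, αl i) + (∑ i, βl i)) - mu₂ / 2 ≤
          dist (αf 0 0) (αf (Fin.last k) (αl (Fin.last k))) := by
  have hd : 0 ≤ δ + 1 := by linarith
  obtain ⟨Dl, hDl, morse_l⟩ := exists_morse_const hd hlam₁ hlam₂
  obtain ⟨Dm, hDm, morse_m⟩ := exists_morse_const hd hmu₁ hmu₂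
  set d := δ + 1 with hd_def
  obtain ⟨R₀, hR₀⟩ : ∃ R₀, R₀ = Dl + Dm + 2 * d := ⟨_, rfl⟩
  have hR₀n : 0 ≤ R₀ := by rw [hR₀]; positivity
  have hB₀ := hBfun R₀ hR₀n
  obtain ⟨K₀, hK₀⟩ : ∃ K₀, K₀ = Bfun R₀ + Dm + 3 * d := ⟨_, rfl⟩
  have hK₀n : 0 ≤ K₀ := by rw [hK₀]; positivity
  obtain ⟨A, hA⟩ : ∃ A, A = 2 * K₀ + 6 * d := ⟨_, rfl⟩
  have hAn : 0 ≤ A := by rw [hA]; positivity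
  obtain ⟨R₁, hR₁⟩ : ∃ R₁, R₁ = Dl + Dl + 2 * d + A := ⟨_, rfl⟩
  have hR₁n : 0 ≤ R₁ := by rw [hR₁]; positivity
  have hB₁ := hBfun R₁ hR₁n
  obtain ⟨K₁, hK₁⟩ : ∃ K₁, K₁ = A + Bfun R₁ + Dl + 3 * d := ⟨_, rfl⟩
  have hK₁n : 0 ≤ K₁ := by rw [hK₁]; positivity
  obtain ⟨K, hK⟩ : ∃ K, K = K₀ + K₁ + A + 3 * d := ⟨_, rfl⟩
  have hKn : 0 ≤ K := by rw [hK]; positivity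
  obtain ⟨C, hC⟩ : ∃ C, C = 2 * K + 2 * K₀ + 6 * d + lam₂ + mu₂ + K₁ + 1 := ⟨_, rfl⟩
  have hCn : 0 ≤ C := by rw [hC]; positivity
  refine ⟨2 * lam₁ * C, ?_⟩
  intro Z _ hG hthin k αf αl βf βl hα hβ hαβ hβα hov hL
  have hT : Thin Z d := thin_of_deltaThin hδ hthin
  have hlam0 : 0 < lam₁ := by linarith
  have hmu0 : 0 < mu₁ := by linarith
  have hβlong : ∀ i, 2 * C ≤ 1 / lam₁ * βl i := by
    intro i
    rw [one_div, le_inv_mul_iff₀ hlam0]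
    linarith [hL i]
  have memα0 : ∀ i, αf i 0 ∈ αf i '' Set.Icc 0 (αl i) := fun i => ⟨0, ⟨le_rfl, (hα i).1⟩, rfl⟩
  have memα1 : ∀ i, αf i (αl i) ∈ αf i '' Set.Icc 0 (αl i) :=
    fun i => ⟨_, ⟨(hα i).1, le_rfl⟩, rfl⟩
  have memβ0 : ∀ i, βf i 0 ∈ βf i '' Set.Icc 0 (βl i) := fun i => ⟨0, ⟨le_rfl, (hβ i).1⟩, rfl⟩
  have memβ1 : ∀ i, βf i (βl i) ∈ βf i '' Set.Icc 0 (βl i) :=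
    fun i => ⟨_, ⟨(hβ i).1, le_rfl⟩, rfl⟩
  have hδR : ∀ R, R ≤ 3 * δ + R := fun R => by linarith
  have cornerα : ∀ i : Fin k, gp (βf i (βl i)) (αf i.castSucc 0) (βf i 0) ≤ K₀ := by
    intro i
    have h := gp_le_of_small_overlap (A := 0) (x := βf i (βl i)) (p := βf i 0)
      (q := αf i.castSucc (αl i.castSucc)) (y := αf i.castSucc 0)
      hT hG hd hDl hDm le_rfl hB₀ (memβ0 i) (memα1 i.castSucc)
      (fun S hS => morse_l Z hT hG _ _ (hβ i) S hS)
      (fun S hS => morse_m Z hT hG _ _ (hα i.castSucc) S hS.symm)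
      (by rw [hαβ, dist_self]) (by linarith [hδR R₀]) ((hα _).isBounded hmu₁)
      ((hov R₀ hR₀n).2.2 i)
    linarith
  have cornerβ : ∀ i : Fin k, gp (βf i 0) (αf i.succ (αl i.succ)) (βf i (βl i)) ≤ K₀ := by
    intro i
    have h := gp_le_of_small_overlap (A := 0) (x := βf i 0) (p := βf i (βl i))
      (q := αf i.succ 0) (y := αf i.succ (αl i.succ))
      hT hG hd hDl hDm le_rfl hB₀ (memβ1 i) (memα0 i.succ)
      (fun S hS => morse_l Z hT hG _ _ (hβ i) S hS.symm)
      (fun S hS => morse_m Z hT hG _ _ (hα i.succ) S hS)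
      (by rw [hβα, dist_self]) (by linarith [hδR R₀]) ((hα _).isBounded hmu₁)
      ((hov R₀ hR₀n).2.1 i)
    linarith
  have cornerββ : ∀ (i : Fin k) (h : (i : ℕ) + 1 < k),
      dist (βf i (βl i)) (βf ⟨i + 1, h⟩ 0) ≤ A →
      gp (βf i 0) (βf ⟨i + 1, h⟩ (βl ⟨i + 1, h⟩)) (βf i (βl i)) ≤ K₁ := by
    intro i h hA'
    have h := gp_le_of_small_overlap (x := βf i 0) (p := βf i (βl i))
      (q := βf ⟨i + 1, h⟩ 0) (y := βf ⟨i + 1, h⟩ (βl ⟨i + 1, h⟩))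
      hT hG hd hDl hDl hAn hB₁ (memβ1 i) (memβ0 _)
      (fun S hS => morse_l Z hT hG _ _ (hβ i) S hS.symm)
      (fun S hS => morse_l Z hT hG _ _ (hβ _) S hS)
      hA' (by linarith [hδR R₁]) ((hβ _).isBounded hlam₁)
      ((hov R₁ hR₁n).1 i h)
    linarith
  -- the corners of the path, indexed by `ℕ` with irrelevant values beyond the path
  set s : ℕ → Z := fun i => if h : i < k + 1 then αf ⟨i, h⟩ (αl ⟨i, h⟩) else αf 0 0 with hs
  set e : ℕ → Z := fun i => if h : i < k then βf ⟨i, h⟩ (βl ⟨i, h⟩) else αf 0 0 with he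
  have sα : ∀ i : Fin (k + 1), s i = αf i (αl i) := fun i => dif_pos i.2
  have eβ : ∀ i : Fin k, e i = βf i (βl i) := fun i => dif_pos i.2
  have sβ : ∀ i : Fin k, s i = βf i 0 := fun i => by
    rw [← hαβ i, ← sα i.castSucc]; rfl
  have eα : ∀ i : Fin k, e i = αf i.succ 0 := fun i => by rw [← hβα i, eβ i]
  have sα' : ∀ i : Fin k, s (i + 1) = αf i.succ (αl i.succ) := fun i => by
    rw [← sα i.succ]; rfl
  have main := broken_geodesic hT hG hd hA hK₀n hK₁n hK (αf 0 0) s e k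
    (fun hk => by
      have := cornerα ⟨0, hk⟩
      rw [← eβ ⟨0, hk⟩, ← sβ ⟨0, hk⟩, gp_comm] at this
      exact this)
    (fun i hi => by
      have := cornerβ ⟨i, hi⟩
      rw [← eβ ⟨i, hi⟩, ← sβ ⟨i, hi⟩, ← sα' ⟨i, hi⟩] at this
      exact this)
    (fun i hi => by
      have := cornerα ⟨i + 1, hi⟩
      rw [← eβ ⟨i + 1, hi⟩, ← sβ ⟨i + 1, hi⟩, gp_comm] at this
      have h2 : αf (Fin.castSucc ⟨i + 1, hi⟩) 0 = e i := (eα ⟨i, by omega⟩).symm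
      rw [h2] at this
      exact this)
    (fun i hi hA' => by
      have := cornerββ ⟨i, by omega⟩ hi
      rw [← eβ ⟨i, by omega⟩, ← sβ ⟨i, by omega⟩, ← eβ ⟨i + 1, hi⟩, ← sβ ⟨i + 1, hi⟩] at this
      exact this hA')
    (fun i hi => by
      have h1 := (hβ ⟨i, hi⟩).le_dist
      have h2 := hβlong ⟨i, hi⟩
      rw [← eβ ⟨i, hi⟩, ← sβ ⟨i, hi⟩] at h1
      have h1 : 1 / lam₁ * βl ⟨i, hi⟩ - lam₂ ≤ dist (s i) (e i) := h1
      linarith)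
  rw [Finset.sum_range] at main
  have hs0 : s 0 = αf 0 (αl 0) := sα 0
  have hsk : s k = αf (Fin.last k) (αl (Fin.last k)) := sα (Fin.last k)
  rw [hs0, hsk] at main
  refine le_trans ?_ main
  -- the common slope is at most `1/(4λ₁)` and at most `1/(4μ₁)`
  have slope_l : 1 / (4 * lam₁ * mu₁) ≤ 1 / lam₁ / 4 := by
    rw [div_div]
    exact one_div_le_one_div_of_le (by positivity) (by nlinarith)
  have slope_m : 1 / (4 * lam₁ * mu₁) ≤ 1 / mu₁ / 4 := by
    rw [div_div]
    exact one_div_le_one_div_of_le (by positivity) (by nlinarith)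
  set κ := 1 / (4 * lam₁ * mu₁) with hκ
  rw [Fin.sum_univ_succ]
  have hsum : ∑ i : Fin k, (κ * αl i.succ + κ * βl i) ≤ ∑ i : Fin k,
      (dist (s i) (e i) + dist (e i) (s (i + 1)) - (2 * K + 2 * K₀ + 6 * d)) := by
    refine Finset.sum_le_sum fun i _ => ?_
    have h1 := (hβ i).le_dist
    have h2 := hβlong i
    have h3 := (hα i.succ).le_dist
    rw [← eβ i, ← sβ i] at h1
    rw [← eα i, ← sα' i] at h3
    have h4 := mul_le_mul_of_nonneg_right slope_l (hβ i).1
    have h5 := mul_le_mul_of_nonneg_right slope_m (hα i.succ).1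
    have h6 : 0 ≤ 1 / mu₁ * αl i.succ := mul_nonneg (by positivity) (hα i.succ).1
    linarith
  rw [Finset.sum_add_distrib, ← Finset.mul_sum, ← Finset.mul_sum] at hsum
  have h1 := (hα 0).le_dist
  have h2 := dist_nonneg (x := αf 0 0) (y := αf 0 (αl 0))
  have h3 := mul_le_mul_of_nonneg_right slope_m (hα 0).1
  have h4 : 0 ≤ 1 / mu₁ * αl 0 := mul_nonneg (by positivity) (hα 0).1
  rw [mul_add, mul_add]
  linarith
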